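/- arXiv:2307.05066 — 2 statements merged into one kernel-verified Lean document; each statement's English description precedes it below -/
import Mathlib

section
/- For every model M, state s, agent i, and formula φ of the language ELKh_n, if M,s ⊨ Kh_i Kh_i φ then M,s ⊨ Kh_i φ (i.e. the formula Kh_i Kh_i φ → Kh_i φ is valid). -/
/-!
Formalization of the logic of strategically knowing how (ELKh_n) and of the
tableau procedure for it.
-/

namespace ELKh

/-- Formulas of the language ELKh_n:
`φ ::= ⊥ | p | ¬φ | (φ ∧ φ) | K_i φ | Kh_i φ`. -/
inductive Formula (P I : Type) : Type
  | bot : Formula P I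
  | atom : P → Formula P I
  | neg : Formula P I → Formula P I
  | and : Formula P I → Formula P I → Formula P I
  | know : I → Formula P I → Formula P I
  | kh : I → Formula P I → Formula P I

variable {P I : Type}

/-- Models of ELKh_n: states with equivalence relations `∼ᵢ`, actions for each
agent, a transition relation for each action, and a valuation. -/
structure Model (P I : Type) where
  W : Type
  sim : I → W → W → Prop
  equiv : ∀ i, Equivalence (sim i)
  Act : I → Type
  R : (i : I) → Act i → W → W → Prop
  V : W → P → Prop

/-- Transition between `i`-equivalence classes (classes are represented by
member states): `[s]ⁱ →ₐ [t]ⁱ` iff some `s' ∈ [s]ⁱ`, `t' ∈ [t]ⁱ` have `R a s' t'`. -/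
def Model.ctrans (M : Model P I) (i : I) (a : M.Act i) (s t : M.W) : Prop :=
  ∃ s' t', M.sim i s s' ∧ M.sim i t t' ∧ M.R i a s' t'

/-- Uniformly executable strategies for agent `i`: partial functions from
`∼ᵢ`-equivalence classes to actions of `i` (hence constant on classes), whose
chosen action is executable at every member of the class. -/
structure Strategy (M : Model P I) (i : I) where
  act : M.W → Option (M.Act i)
  congr : ∀ s t, M.sim i s t → act s = act t
  exec : ∀ s a, act s = some a → ∀ t, M.sim i s t → ∃ u, M.R i a t u

namespace Strategy

variable {M : Model P I} {i : I}

/-- The `k`-th step of the sequence of classes `[δ 0][δ 1]⋯` is a σ-step. -/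
def Steps (σ : Strategy M i) (δ : ℕ → M.W) (k : ℕ) : Prop :=
  ∃ a, σ.act (δ k) = some a ∧ M.ctrans i a (δ k) (δ (k+1))

/-- `[δ 0]⋯[δ h]` is a (finite) possible execution of σ. -/
def FinExec (σ : Strategy M i) (δ : ℕ → M.W) (h : ℕ) : Prop :=
  ∀ k < h, σ.Steps δ k

/-- `[δ 0]⋯[δ h]` is a complete finite execution of σ (its end class is not in
the domain of σ). -/
def CompleteFinExec (σ : Strategy M i) (δ : ℕ → M.W) (h : ℕ) : Prop :=
  σ.FinExec δ h ∧ σ.act (δ h) = none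

/-- `[δ 0][δ 1]⋯` is an infinite possible execution of σ (such an execution is
automatically complete). -/
def InfExec (σ : Strategy M i) (δ : ℕ → M.W) : Prop :=
  ∀ k, σ.Steps δ k

end Strategy

/-- Satisfaction for ELKh_n.  `Kh_i φ` holds at `s` iff there is a strategy σ
for `i` such that all complete executions of σ starting from `[s]ⁱ` are finite
(equivalently: there is no infinite execution of σ from `[s]ⁱ`) and every state
of every end class of a complete (finite) execution from `[s]ⁱ` satisfies `φ`. -/
def Sat (M : Model P I) : M.W → Formula P I → Prop
  | _, .bot => False
  | s, .atom p => M.V s p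
  | s, .neg φ => ¬ Sat M s φ
  | s, .and φ ψ => Sat M s φ ∧ Sat M s ψ
  | s, .know i φ => ∀ t, M.sim i s t → Sat M t φ
  | s, .kh i φ => ∃ σ : Strategy M i,
      (∀ δ : ℕ → M.W, M.sim i s (δ 0) → ¬ σ.InfExec δ) ∧
      (∀ (δ : ℕ → M.W) (h : ℕ), M.sim i s (δ 0) → σ.CompleteFinExec δ h →
        ∀ t, M.sim i (δ h) t → Sat M t φ)

/-! ### Subformulas -/

/-- The set of subformulas of a formula. -/
def subf : Formula P I → Set (Formula P I)
  | .bot => {Formula.bot}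
  | .atom p => {Formula.atom p}
  | .neg φ => insert (Formula.neg φ) (subf φ)
  | .and φ ψ => insert (Formula.and φ ψ) (subf φ ∪ subf ψ)
  | .know i φ => insert (Formula.know i φ) (subf φ)
  | .kh i φ => insert (Formula.kh i φ) (subf φ)

/-- `sub⁺(φ₀) = {ψ, ¬ψ : ψ subformula of φ₀} ∪ {Kᵢψ, ¬Kᵢψ : Khᵢψ subformula of φ₀}`. -/
def subPlus (φ0 : Formula P I) : Set (Formula P I) :=
  {χ | ∃ ψ ∈ subf φ0, χ = ψ ∨ χ = Formula.neg ψ} ∪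
  {χ | ∃ i ψ, Formula.kh i ψ ∈ subf φ0 ∧
      (χ = Formula.know i ψ ∨ χ = Formula.neg (Formula.know i ψ))}

/-- `∼ψ`:  `∼¬χ = χ`, and `∼ψ = ¬ψ` otherwise. -/
def simNeg : Formula P I → Formula P I
  | .neg χ => χ
  | ψ => Formula.neg ψ

/-! ### Labeled trees -/

/-- Labels of tableau edges: `ε`, an agent `i`, or an action `a_{Khᵢψ}`. -/
inductive ELabel (P I : Type) : Type
  | eps : ELabel P I
  | ag : I → ELabel P I
  | act : I → Formula P I → ELabel P I

/-- Labeled rooted trees: each node is labeled with a set of formulas, each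
non-root node carries the label of the edge connecting it to its parent, and
`blockedBy n = some n'` records that the node `n` is blocked by `n'`. -/
structure LTree (P I : Type) where
  Node : Type
  root : Node
  parent : Node → Option Node
  depth : Node → ℕ
  label : Node → Set (Formula P I)
  elabel : Node → ELabel P I
  blockedBy : Node → Option Node
  parent_root : parent root = none
  eq_root : ∀ n, parent n = none → n = root
  depth_root : depth root = 0
  depth_parent : ∀ n m, parent n = some m → depth n = depth m + 1

variable (T : LTree P I)

/-- The children of a node. -/
def Children (n : T.Node) : Set T.Node := {m | T.parent m = some n}

/-- A node is a leaf iff it has no children. -/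
def IsLeaf (n : T.Node) : Prop := ∀ m, T.parent m ≠ some n

/-- `Ancestor T m n`: `m` is a proper ancestor of `n`. -/
def Ancestor (m n : T.Node) : Prop :=
  Relation.TransGen (fun a b => T.parent b = some a) m n

/-- `IAnc T i m n`: `m` is an `i`-ancestor of `n`, i.e. a proper ancestor of
`n` connected to `n` by a path all of whose edges are labeled `i` or `ε`. -/
inductive IAnc (i : I) : T.Node → T.Node → Prop
  | single {m n} : T.parent n = some m →
      (T.elabel n = ELabel.eps ∨ T.elabel n = ELabel.ag i) → IAnc i m n
  | cons {m k n} : T.parent n = some k →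
      (T.elabel n = ELabel.eps ∨ T.elabel n = ELabel.ag i) →
      IAnc i m k → IAnc i m n

/-! ### The tableau construction -/

/-- A set of formulas is blatantly inconsistent iff it contains `⊥` or some
pair `ψ, ¬ψ`. -/
def Blatant (Γ : Set (Formula P I)) : Prop :=
  Formula.bot ∈ Γ ∨ ∃ ψ, ψ ∈ Γ ∧ Formula.neg ψ ∈ Γ

/-- `AutoChecked Γ φ` holds iff none of the expansion rules (a)-(g) is
applicable to `φ` in the label `Γ`; such formulas are (and remain) marked
``checked'' by step (h) of the construction. -/
def AutoChecked (Γ : Set (Formula P I)) : Formula P I → Prop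
  | .neg (.neg ψ) => ψ ∈ Γ
  | .and ψ χ => ψ ∈ Γ ∧ χ ∈ Γ
  | .neg (.and ψ χ) =>
      (Formula.neg ψ ∈ Γ ∧ Formula.neg χ ∈ Γ) ∨
      (Formula.neg ψ ∈ Γ ∧ χ ∈ Γ) ∨ (ψ ∈ Γ ∧ Formula.neg χ ∈ Γ)
  | .know _ ψ => ψ ∈ Γ
  | .neg (.know _ ψ) => Formula.neg ψ ∈ Γ ∨ ψ ∈ Γ
  | .kh i ψ => Formula.neg (Formula.know i ψ) ∈ Γ ∨ Formula.know i ψ ∈ Γ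
  | .neg (.kh i ψ) => Formula.neg (Formula.know i ψ) ∈ Γ
  | _ => True

/-- All formulas of `Γ` are checked; nodes with such labels are the ``and''
nodes (expanded by step (2)), the remaining expanded nodes are ``or'' nodes. -/
def Saturated (Γ : Set (Formula P I)) : Prop := ∀ φ ∈ Γ, AutoChecked Γ φ

/-- The labels of the children created when one of the rules (a)-(g) processes
the formula `φ` at a node labeled `Γ`. -/
def orOut (Γ : Set (Formula P I)) : Formula P I → Set (Set (Formula P I))
  | .neg (.neg ψ) => {insert ψ Γ}
  | .and ψ χ => {insert ψ (insert χ Γ)}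
  | .neg (.and ψ χ) =>
      {insert (Formula.neg ψ) (insert (Formula.neg χ) Γ),
       insert (Formula.neg ψ) (insert χ Γ),
       insert ψ (insert (Formula.neg χ) Γ)}
  | .know _ ψ => {insert ψ Γ}
  | .neg (.know _ ψ) => {insert (Formula.neg ψ) Γ, insert ψ Γ}
  | .kh i ψ =>
      {insert (Formula.neg (Formula.know i ψ)) Γ, insert (Formula.know i ψ) Γ}
  | .neg (.kh i ψ) => {insert (Formula.neg (Formula.know i ψ)) Γ}
  | _ => ∅

/-- `Σ(n,¬Kᵢψ) = {¬ψ} ∪ Γ|Kᵢ ∪ Γ|¬Kᵢ ∪ Γ|Khᵢ ∪ Γ|¬Khᵢ` where `Γ = L(n)`. -/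
def SigmaSet (Γ : Set (Formula P I)) (i : I) (ψ : Formula P I) :
    Set (Formula P I) :=
  insert (Formula.neg ψ)
    {φ ∈ Γ | (∃ χ, φ = Formula.know i χ) ∨ (∃ χ, φ = Formula.neg (Formula.know i χ)) ∨
             (∃ χ, φ = Formula.kh i χ) ∨ (∃ χ, φ = Formula.neg (Formula.kh i χ))}

/-- Expansion condition for ``or'' nodes (step (1), rules (a)-(g)): some
unchecked formula of the label is processed and the children of the node are
exactly the prescribed `ε`-children. -/
def OrNodeCond (n : T.Node) : Prop :=
  ∃ φ ∈ T.label n, ¬ AutoChecked (T.label n) φ ∧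
    (∀ Δ ∈ orOut (T.label n) φ,
      ∃ m, T.parent m = some n ∧ T.elabel m = ELabel.eps ∧ T.label m = Δ ∧
        T.blockedBy m = none) ∧
    (∀ m, T.parent m = some n →
      T.elabel m = ELabel.eps ∧ T.label m ∈ orOut (T.label n) φ ∧
        T.blockedBy m = none)

/-- Expansion condition for ``and'' nodes (step (2), rules (i), (j), (k)): the
children of the node are exactly those prescribed by the three rules, and a
(k)-child is blocked iff some ancestor carries the same label. -/
def AndNodeCond (n : T.Node) : Prop :=
  (∀ i ψ, Formula.neg (Formula.know i ψ) ∈ T.label n →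
    ¬ (∃ n', IAnc T i n' n ∧ T.label n' = SigmaSet (T.label n) i ψ) →
    ∃ m, T.parent m = some n ∧ T.elabel m = ELabel.ag i ∧
      T.label m = SigmaSet (T.label n) i ψ ∧ T.blockedBy m = none) ∧
  (∀ i ψ, Formula.kh i ψ ∈ T.label n → Formula.neg (Formula.know i ψ) ∈ T.label n →
    ∃ m, T.parent m = some n ∧ T.elabel m = ELabel.act i ψ ∧
      T.label m = {Formula.know i ψ} ∧ T.blockedBy m = none) ∧
  (∀ i ψ χ, Formula.neg (Formula.kh i χ) ∈ T.label n →
    Formula.kh i ψ ∈ T.label n → Formula.neg (Formula.know i ψ) ∈ T.label n →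
    ∃ m, T.parent m = some n ∧ T.elabel m = ELabel.act i ψ ∧
      T.label m = {Formula.know i ψ, Formula.neg (Formula.kh i χ)} ∧
      ((∃ n', Ancestor T n' m ∧ T.label n' = T.label m) ↔ T.blockedBy m ≠ none)) ∧
  (∀ m, T.parent m = some n →
    (∃ i ψ, T.elabel m = ELabel.ag i ∧ Formula.neg (Formula.know i ψ) ∈ T.label n ∧
      T.label m = SigmaSet (T.label n) i ψ ∧
      ¬ (∃ n', IAnc T i n' n ∧ T.label n' = SigmaSet (T.label n) i ψ)) ∨
    (∃ i ψ, T.elabel m = ELabel.act i ψ ∧ Formula.kh i ψ ∈ T.label n ∧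
      Formula.neg (Formula.know i ψ) ∈ T.label n ∧
      T.label m = {Formula.know i ψ}) ∨
    (∃ i ψ χ, T.elabel m = ELabel.act i ψ ∧ Formula.neg (Formula.kh i χ) ∈ T.label n ∧
      Formula.kh i ψ ∈ T.label n ∧ Formula.neg (Formula.know i ψ) ∈ T.label n ∧
      T.label m = {Formula.know i ψ, Formula.neg (Formula.kh i χ)}))

/-- `T` is a tableau for `φ₀`: the root is labeled `{φ₀}`, blocked nodes are
blocked by an ancestor with the same label, blocked nodes and blatantly
inconsistent nodes are leaves, and every other node is expanded according to
step (1) (``or'' nodes) or step (2) (``and'' nodes) of the construction. -/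
structure IsTableau (φ0 : Formula P I) (T : LTree P I) : Prop where
  root_label : T.label T.root = {φ0}
  blocked_spec : ∀ n n', T.blockedBy n = some n' →
    Ancestor T n' n ∧ T.label n' = T.label n
  blocked_leaf : ∀ n, T.blockedBy n ≠ none → IsLeaf T n
  blatant_leaf : ∀ n, Blatant (T.label n) → IsLeaf T n
  or_node : ∀ n, ¬ Blatant (T.label n) → T.blockedBy n = none →
    ¬ Saturated (T.label n) → OrNodeCond T n
  and_node : ∀ n, ¬ Blatant (T.label n) → T.blockedBy n = none →
    Saturated (T.label n) → AndNodeCond T n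

/-! ### Subtrees -/

/-- A subtree: a set of nodes containing the root and closed under parents. -/
def IsSubtree (S : Set T.Node) : Prop :=
  T.root ∈ S ∧ ∀ n ∈ S, ∀ m, T.parent n = some m → m ∈ S

/-- A complete subtree: it contains the root, all children of each of its
``and'' non-leaf nodes, and at least one child of each of its ``or'' non-leaf
nodes. -/
def CompleteSubtree (S : Set T.Node) : Prop :=
  IsSubtree T S ∧
  (∀ n ∈ S, ¬ IsLeaf T n → Saturated (T.label n) → ∀ m ∈ Children T n, m ∈ S) ∧
  (∀ n ∈ S, ¬ IsLeaf T n → ¬ Saturated (T.label n) → ∃ m ∈ Children T n, m ∈ S)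

/-- A subtree is closed iff some of its nodes has a blatantly inconsistent
label; otherwise it is open. -/
def ClosedSubtree (S : Set T.Node) : Prop := ∃ n ∈ S, Blatant (T.label n)

/-- A tableau is closed iff all its complete subtrees are closed. -/
def TableauClosed : Prop := ∀ S : Set T.Node, CompleteSubtree T S → ClosedSubtree T S

/-! ### Maximal ε-paths and the induced model -/

/-- An `ε`-edge from `m` down to `n` inside the node set `S`. -/
def EpsStep (S : Set T.Node) (m n : T.Node) : Prop :=
  m ∈ S ∧ n ∈ S ∧ T.parent n = some m ∧ T.elabel n = ELabel.eps

/-- `n` is an `ε`-descendant of `m` inside `S` (reflexive-transitive). -/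
def EpsDesc (S : Set T.Node) : T.Node → T.Node → Prop :=
  Relation.ReflTransGen (EpsStep T S)

/-- A maximal `ε`-path of the subtree with node set `S`, recorded by its
initial node `top` and its end node `bot`.  Its label is `T.label bot`. -/
structure MaxEpsPath (T : LTree P I) (S : Set T.Node) where
  top : T.Node
  bot : T.Node
  top_mem : top ∈ S
  bot_mem : bot ∈ S
  desc : EpsDesc T S top bot
  top_max : ∀ m, ¬ EpsStep T S m top
  bot_max : ∀ m, ¬ EpsStep T S bot m

/-- The states of the induced model: non-blocked maximal `ε`-paths. -/
def PathW (T : LTree P I) (S : Set T.Node) : Type :=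
  {ρ : MaxEpsPath T S // T.blockedBy ρ.bot = none}

/-- `ρ₂` is an `i`-child path of `ρ₁`: `ρ₁ρ₂` is a path whose connecting edge
is labeled `i`. -/
def ISimStep (S : Set T.Node) (i : I) (ρ1 ρ2 : PathW T S) : Prop :=
  T.parent ρ2.1.top = some ρ1.1.bot ∧ T.elabel ρ2.1.top = ELabel.ag i

/-- The node `n'` lies on the maximal `ε`-path `ρ`. -/
def OnPath (S : Set T.Node) (ρ : MaxEpsPath T S) (n' : T.Node) : Prop :=
  EpsDesc T S ρ.top n' ∧ EpsDesc T S n' ρ.bot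

/-- The model `M^T` induced by the (complete) subtree with node set `S`:
states are the non-blocked maximal `ε`-paths, `∼ᵢ` is the least equivalence
relation containing the `i`-edge steps, actions of agent `i` are the actions
`a_{Khᵢψ}` labeling edges of the subtree, `(ρ, ρ') ∈ R_a` iff there is an
`a`-edge from the end of `ρ` to the start of a maximal `ε`-path `ρ''` where
`ρ'' = ρ'` or `ρ''` is blocked by a node lying on `ρ'`, and `ρ ∈ V(p)` iff
`p ∈ L(ρ)`. -/
def inducedModel (T : LTree P I) (S : Set T.Node) : Model P I where
  W := PathW T S
  sim := fun i => Relation.EqvGen (ISimStep T S i)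
  equiv := fun _ => Relation.EqvGen.is_equivalence _
  Act := fun i => {ψ : Formula P I // ∃ m n, m ∈ S ∧ n ∈ S ∧
    T.parent m = some n ∧ T.elabel m = ELabel.act i ψ}
  R := fun i a ρ1 ρ2 => ∃ ρ'' : MaxEpsPath T S,
    T.parent ρ''.top = some ρ1.1.bot ∧ T.elabel ρ''.top = ELabel.act i a.1 ∧
    (ρ'' = ρ2.1 ∨ ∃ n', T.blockedBy ρ''.bot = some n' ∧ OnPath T S ρ2.1 n')
  V := fun ρ p => Formula.atom p ∈ T.label ρ.1.bot

/-- `L(ρ)|Kᵢ`: the `Kᵢ`-formulas of `Γ`. -/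
def projK (i : I) (Γ : Set (Formula P I)) : Set (Formula P I) :=
  {φ ∈ Γ | ∃ ψ, φ = Formula.know i ψ}

/-- `L(ρ)|¬Kᵢ`: the `¬Kᵢ`-formulas of `Γ`. -/
def projNK (i : I) (Γ : Set (Formula P I)) : Set (Formula P I) :=
  {φ ∈ Γ | ∃ ψ, φ = Formula.neg (Formula.know i ψ)}

/-- `L(ρ)|Khᵢ`: the `Khᵢ`-formulas of `Γ`. -/
def projKh (i : I) (Γ : Set (Formula P I)) : Set (Formula P I) :=
  {φ ∈ Γ | ∃ ψ, φ = Formula.kh i ψ}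

/-- `L(ρ)|¬Khᵢ`: the `¬Khᵢ`-formulas of `Γ`. -/
def projNKh (i : I) (Γ : Set (Formula P I)) : Set (Formula P I) :=
  {φ ∈ Γ | ∃ ψ, φ = Formula.neg (Formula.kh i ψ)}

/-!
The classes of `∼ᵢ` and the actions of `i` form a one-player game with nondeterministic moves, and
`Khᵢ φ` says that the current class lies in the attractor of the classes contained in the truth set
of `φ`. An attractor is a least fixed point, so taking the attractor of an attractor adds nothing:
this is `Khᵢ Khᵢ φ → Khᵢ φ`.

If a strategy guarantees `φ` from a class outside the attractor, some play following it never
enters the attractor, a contradiction. Conversely, the least fixed point is built in transfinite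
stages; the strategy that always moves to earlier stages terminates, and it can only get stuck in a
class contained in the truth set of `φ`.
-/

open OrdinalApprox in
theorem exists_rank_lfp.{u} {α : Type u} (f : Set α →o Set α) :
    ∃ rank : α → Ordinal.{u}, ∀ x ∈ f.lfp, x ∈ f {y ∈ f.lfp | rank y < rank x} := by
  let stage (o : Ordinal.{u}) : Set α := lfpApprox f ⊥ o
  have stage_subset (o : Ordinal.{u}) : stage o ⊆ f.lfp :=
    lfpApprox_le_of_mem_fixedPoints f f.isFixedPt_lfp bot_le o
  have mem_stage {x : α} {o : Ordinal.{u}} (hx : x ∈ stage o) : ∃ o' < o, x ∈ f (stage o') := by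
    unfold stage lfpApprox at hx
    simpa [stage] using hx
  let rank (x : α) : Ordinal.{u} := sInf {o | x ∈ f (stage o)}
  refine ⟨rank, fun x hx => ?_⟩
  have hx_rank : x ∈ f (stage (rank x)) := by
    obtain ⟨o, ho⟩ := lfp_mem_range_lfpApprox f
    obtain ⟨o', -, hx'⟩ := mem_stage (ho.symm ▸ hx)
    exact csInf_mem (s := {o | x ∈ f (stage o)}) ⟨o', hx'⟩
  have stage_rank_subset : stage (rank x) ⊆ {y ∈ f.lfp | rank y < rank x} := by
    intro y hy
    obtain ⟨o, ho, hyo⟩ := mem_stage hy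
    have hy_rank : rank y ≤ o := csInf_le' hyo
    exact ⟨stage_subset _ hy, hy_rank.trans_lt ho⟩
  exact f.monotone stage_rank_subset hx_rank

/-- A one-player game with nondeterministic moves: at a position `c` the player may choose any
action `a` with `Executable a c`, and the play continues at some `d` with `Trans a c d`. -/
structure Arena (C A : Type*) where
  Executable : A → C → Prop
  Trans : A → C → C → Prop

namespace Arena

variable {C A : Type*} (G : Arena C A) (X : Set C)

/-- The operator adding to `X` the positions from which the player can force the next position
into `Z`. -/
def attractorStep : Set C →o Set C where
  toFun Z := X ∪ {c | ∃ a, G.Executable a c ∧ ∀ d, G.Trans a c d → d ∈ Z}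
  monotone' _ _ hZ := Set.union_subset_union_right X
    fun _ ⟨a, ha, had⟩ => ⟨a, ha, fun d hd => hZ (had d hd)⟩

/-- The attractor of `X`: the positions from which the player can force the play to reach `X`. -/
def attractor : Set C := (G.attractorStep X).lfp

theorem attractorStep_attractor : G.attractorStep X (G.attractor X) = G.attractor X :=
  (G.attractorStep X).map_lfp

variable {X}

theorem subset_attractor : X ⊆ G.attractor X :=
  Set.subset_union_left.trans (G.attractorStep_attractor X).subset

theorem mem_attractor_of_trans {c : C} {a : A} (ha : G.Executable a c)
    (h : ∀ d, G.Trans a c d → d ∈ G.attractor X) : c ∈ G.attractor X :=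
  (G.attractorStep_attractor X).subset (Or.inr ⟨a, ha, h⟩)

theorem attractor_attractor : G.attractor (G.attractor X) = G.attractor X :=
  Set.Subset.antisymm
    ((G.attractorStep (G.attractor X)).lfp_le <| Set.union_subset subset_rfl
      fun _ ⟨_, ha, h⟩ => G.mem_attractor_of_trans ha h)
    G.subset_attractor

variable (X)

theorem exists_strategy_attractor : ∃ f : C → Option A,
    (∀ c a, f c = some a → G.Executable a c) ∧
    (∀ c a d, f c = some a → G.Trans a c d → d ∈ G.attractor X) ∧
    (WellFounded fun d c => ∃ a, f c = some a ∧ G.Trans a c d) ∧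
    ∀ c ∈ G.attractor X, f c = none → c ∈ X := by
  obtain ⟨rank, hrank⟩ := exists_rank_lfp (G.attractorStep X)
  let Progress (c : C) (a : A) : Prop :=
    G.Executable a c ∧ ∀ d, G.Trans a c d → d ∈ G.attractor X ∧ rank d < rank c
  have exists_choice (c : C) : ∃ o : Option A,
      (∀ a, o = some a → Progress c a) ∧ (c ∈ G.attractor X → o = none → c ∈ X) := by
    by_cases hc : ∃ a, Progress c a
    · obtain ⟨a, ha⟩ := hc
      exact ⟨some a, fun _ h => Option.some.inj h ▸ ha, fun _ h => (nomatch h)⟩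
    · exact ⟨none, fun _ h => (nomatch h), fun hcX _ => (hrank c hcX).resolve_right hc⟩
  choose f progress mem_of_none using exists_choice
  refine ⟨f, fun c a h => (progress c a h).1, fun c a d h hd => ((progress c a h).2 d hd).1,
    ?_, mem_of_none⟩
  exact Subrelation.wf (fun ⟨a, h, hd⟩ => ((progress _ a h).2 _ hd).2)
    (InvImage.wf rank wellFounded_lt)

end Arena

section Classes

variable (M : Model P I) (i : I)

/-- The equivalence relation `∼ᵢ`, bundled so that `∼ᵢ`-classes are elements of a quotient. -/
def Model.setoid : Setoid M.W := ⟨M.sim i, M.equiv i⟩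

/-- The game agent `i` plays on the `∼ᵢ`-classes: `a` is executable at a class if it is executable
at each of its states, and its transitions are `[s]ⁱ →ₐ [t]ⁱ`. -/
def Model.arena : Arena (Quotient (M.setoid i)) (M.Act i) where
  Executable a c := ∀ s, ⟦s⟧ = c → ∃ u, M.R i a s u
  Trans a c d := ∃ s t, ⟦s⟧ = c ∧ ⟦t⟧ = d ∧ M.R i a s t

/-- The `∼ᵢ`-classes contained in `X`. -/
def Model.classesIn (X : Set M.W) : Set (Quotient (M.setoid i)) := {c | ∀ t, ⟦t⟧ = c → t ∈ X}

variable {M i}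

theorem Model.mk_eq_mk_iff {s t : M.W} :
    (⟦s⟧ : Quotient (M.setoid i)) = ⟦t⟧ ↔ M.sim i t s :=
  Quotient.eq.trans ⟨(M.equiv i).symm, (M.equiv i).symm⟩

theorem Model.arena_executable_mk {a : M.Act i} {s : M.W} :
    (M.arena i).Executable a ⟦s⟧ ↔ ∀ t, M.sim i s t → ∃ u, M.R i a t u := by
  simp only [Model.arena, Model.mk_eq_mk_iff]

theorem Model.arena_trans_mk {a : M.Act i} {s t : M.W} :
    (M.arena i).Trans a ⟦s⟧ ⟦t⟧ ↔ M.ctrans i a s t := by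
  simp only [Model.arena, Model.mk_eq_mk_iff, Model.ctrans]

theorem Model.mk_mem_classesIn {X : Set M.W} {s : M.W} :
    ⟦s⟧ ∈ M.classesIn i X ↔ ∀ t, M.sim i s t → t ∈ X := by
  simp only [Model.classesIn, Set.mem_ofPred_eq, Model.mk_eq_mk_iff]

end Classes

section Guarantees

variable {M : Model P I} {i : I} {X : Set M.W} {s : M.W}

/-- All complete executions of `σ` from `[s]ⁱ` are finite and end in classes contained in `X`. -/
def Strategy.Guarantees (σ : Strategy M i) (s : M.W) (X : Set M.W) : Prop :=
  (∀ δ : ℕ → M.W, M.sim i s (δ 0) → ¬ σ.InfExec δ) ∧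
  ∀ (δ : ℕ → M.W) (h : ℕ), M.sim i s (δ 0) → σ.CompleteFinExec δ h →
    ∀ t, M.sim i (δ h) t → t ∈ X

theorem Strategy.exists_ctrans_notMem_attractor (σ : Strategy M i) {a : M.Act i}
    {Z : Set (Quotient (M.setoid i))} (ha : σ.act s = some a) (hs : ⟦s⟧ ∉ (M.arena i).attractor Z) :
    ∃ t, M.ctrans i a s t ∧ ⟦t⟧ ∉ (M.arena i).attractor Z := by
  by_contra! hin
  refine hs (Arena.mem_attractor_of_trans _ (Model.arena_executable_mk.2 (σ.exec s a ha)) ?_)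
  exact Quotient.ind fun t ht => hin t (Model.arena_trans_mk.1 ht)

theorem Strategy.Guarantees.mem_attractor {σ : Strategy M i} (hσ : σ.Guarantees s X) :
    ⟦s⟧ ∈ (M.arena i).attractor (M.classesIn i X) := by
  by_contra hs
  let Escaped : Type := {t : M.W // ⟦t⟧ ∉ (M.arena i).attractor (M.classesIn i X)}
  have exists_next (t : Escaped) :
      ∃ t' : Escaped, ∀ a, σ.act t.1 = some a → M.ctrans i a t.1 t'.1 := by
    cases ht : σ.act t.1 with
    | none => exact ⟨t, fun _ h => (nomatch h)⟩
    | some a =>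
      obtain ⟨t', htt', ht'⟩ := σ.exists_ctrans_notMem_attractor ht t.2
      exact ⟨⟨t', ht'⟩, fun _ h => Option.some.inj h ▸ htt'⟩
  choose next ctrans_next using exists_next
  let play (k : ℕ) : Escaped := next^[k] ⟨s, hs⟩
  let δ (k : ℕ) : M.W := (play k).1
  have steps {k : ℕ} (hk : σ.act (δ k) ≠ none) : σ.Steps δ k := by
    obtain ⟨a, ha⟩ := Option.ne_none_iff_exists'.1 hk
    refine ⟨a, ha, ?_⟩
    simpa only [δ, play, Function.iterate_succ_apply'] using ctrans_next (play k) a ha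
  by_cases hend : ∃ k, σ.act (δ k) = none
  · classical
    have hcomplete : σ.CompleteFinExec δ (Nat.find hend) :=
      ⟨fun k hk => steps (Nat.find_min hend hk), Nat.find_spec hend⟩
    have hX := hσ.2 δ _ ((M.equiv i).refl s) hcomplete
    exact (play _).2 (Arena.subset_attractor _ (Model.mk_mem_classesIn.2 hX))
  · push Not at hend
    exact hσ.1 δ ((M.equiv i).refl s) fun k => steps (hend k)

theorem exists_guarantees_of_mem_attractor
    (hs : ⟦s⟧ ∈ (M.arena i).attractor (M.classesIn i X)) :
    ∃ σ : Strategy M i, σ.Guarantees s X := by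
  obtain ⟨f, executable, mem_attractor, wf, mem_of_none⟩ :=
    (M.arena i).exists_strategy_attractor (M.classesIn i X)
  let σ : Strategy M i :=
    { act := fun t => f ⟦t⟧
      congr := fun t t' h => congrArg f (Quotient.sound h)
      exec := fun t a h => Model.arena_executable_mk.1 (executable _ a h) }
  refine ⟨σ, fun δ _ hδ => ?_, fun δ h h0 hδ => ?_⟩
  · refine (wellFounded_iff_isEmpty_descending_chain.1 wf).false ⟨fun k => ⟦δ k⟧, fun k => ?_⟩
    obtain ⟨a, ha, hstep⟩ := hδ k
    exact ⟨a, ha, Model.arena_trans_mk.2 hstep⟩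
  · have hend : ⟦δ h⟧ ∈ (M.arena i).attractor (M.classesIn i X) := by
      cases h with
      | zero => rwa [Model.mk_eq_mk_iff.2 h0]
      | succ k =>
        obtain ⟨a, ha, hstep⟩ := hδ.1 k k.lt_succ_self
        exact mem_attractor _ a _ ha (Model.arena_trans_mk.2 hstep)
    exact Model.mk_mem_classesIn.1 (mem_of_none _ hend hδ.2)

end Guarantees

theorem sat_kh_iff_mem_attractor {M : Model P I} {s : M.W} {i : I} {φ : Formula P I} :
    Sat M s (.kh i φ) ↔ ⟦s⟧ ∈ (M.arena i).attractor (M.classesIn i {t | Sat M t φ}) := by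
  rw [Sat]
  exact ⟨fun ⟨_, hσ⟩ => Strategy.Guarantees.mem_attractor hσ, exists_guarantees_of_mem_attractor⟩

theorem classesIn_sat_kh (M : Model P I) (i : I) (φ : Formula P I) :
    M.classesIn i {t | Sat M t (.kh i φ)} =
      (M.arena i).attractor (M.classesIn i {t | Sat M t φ}) := by
  ext c
  simp only [Model.classesIn, Set.mem_ofPred_eq, sat_kh_iff_mem_attractor]
  exact ⟨fun h => c.out_eq ▸ h c.out c.out_eq, fun hc _ ht => ht ▸ hc⟩

/-- the formula `Kh_i Kh_i φ → Kh_i φ` is valid. -/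
theorem kh_kh_imp_kh {P I : Type} (hI : ∃ i j : I, i ≠ j)
    (M : Model P I) (s : M.W) (i : I) (φ : Formula P I)
    (h : Sat M s (Formula.kh i (Formula.kh i φ))) :
    Sat M s (Formula.kh i φ) := by
  rw [sat_kh_iff_mem_attractor] at h ⊢
  rwa [classesIn_sat_kh, Arena.attractor_attractor] at h

end ELKh
end

section
/- Let T be a complete subtree of the tableau T_{φ0}, σ an i-strategy in the induced model M^T, and δ = [ρ1]^i ⋯ [ρh]^i a possible execution of σ in M^T. If ¬Kh_i χ ∈ L(ρh) and δ is not complete, then there exists ρ ∈ W(M^T) such that δ[ρ]^i is a possible execution of σ and ¬Kh_i χ ∈ L(ρ). -/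
/-!
Formalization of the logic of strategically knowing how (ELKh_n) and of the
tableau procedure for it.
-/

namespace ELKh

variable {P I : Type}

variable (T : LTree P I)

/-!
The strategy picks an action `a_{Khᵢψ}` that is executable at the last state `ρ`, so the end of `ρ`
is an and-node whose label contains `Khᵢψ` and `¬Kᵢψ`. Since it also contains `¬Khᵢχ`, rule (k) has
created an `a_{Khᵢψ}`-child labeled `{Kᵢψ, ¬Khᵢχ}`. Labels only grow along a maximal `ε`-path
starting at this child, and if that path is blocked then its blocking ancestor has the same label
as its end, so in either case the action leads to a state whose label contains `¬Khᵢχ`.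

Every node lies on a maximal `ε`-path because each label is a subset of the finite set `sub⁺(φ₀)`
and grows strictly along `ε`-edges.
-/

theorem exists_reflTransGen_minimal {α : Type*} {r : α → α → Prop} (hr : WellFounded r) (a : α) :
    ∃ b, Relation.ReflTransGen r b a ∧ ∀ c, ¬ r c b := by
  obtain ⟨b, hba, hmin⟩ := hr.has_min {b | Relation.ReflTransGen r b a} ⟨a, .refl⟩
  exact ⟨b, hba, fun c hcb => hmin c (hba.head hcb) hcb⟩

section Subformulas

variable {φ φ0 ψ χ : Formula P I} {i : I}

theorem mem_subf_self (φ : Formula P I) : φ ∈ subf φ := by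
  cases φ <;> simp [subf]

theorem subf_subset_subf (hψ : ψ ∈ subf φ) : subf ψ ⊆ subf φ := by
  induction φ with
  | bot | atom _ => rw [Set.mem_singleton_iff.1 hψ]
  | neg φ ih | know i φ ih | kh i φ ih =>
    rcases hψ with rfl | hψ
    · rfl
    · exact (ih hψ).trans (Set.subset_insert _ _)
  | and φ₁ φ₂ ih₁ ih₂ =>
    rcases hψ with rfl | hψ | hψ
    · rfl
    · exact (ih₁ hψ).trans (Set.subset_union_left.trans (Set.subset_insert _ _))
    · exact (ih₂ hψ).trans (Set.subset_union_right.trans (Set.subset_insert _ _))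

theorem mem_subf_of_neg_mem_subf (h : Formula.neg ψ ∈ subf φ0) : ψ ∈ subf φ0 :=
  subf_subset_subf h (.inr (mem_subf_self ψ))

theorem mem_subf_of_know_mem_subf (h : Formula.know i ψ ∈ subf φ0) : ψ ∈ subf φ0 :=
  subf_subset_subf h (.inr (mem_subf_self ψ))

theorem mem_subf_of_kh_mem_subf (h : Formula.kh i ψ ∈ subf φ0) : ψ ∈ subf φ0 :=
  subf_subset_subf h (.inr (mem_subf_self ψ))

theorem mem_subf_of_and_mem_subf (h : Formula.and ψ χ ∈ subf φ0) :
    ψ ∈ subf φ0 ∧ χ ∈ subf φ0 :=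
  ⟨subf_subset_subf h (.inr (.inl (mem_subf_self ψ))),
    subf_subset_subf h (.inr (.inr (mem_subf_self χ)))⟩

theorem subf_subset_subPlus (φ0 : Formula P I) : subf φ0 ⊆ subPlus φ0 :=
  fun ψ hψ => .inl ⟨ψ, hψ, .inl rfl⟩

theorem neg_mem_subPlus (h : ψ ∈ subf φ0) : Formula.neg ψ ∈ subPlus φ0 :=
  .inl ⟨ψ, h, .inr rfl⟩

theorem know_mem_subPlus (h : Formula.kh i ψ ∈ subf φ0) : Formula.know i ψ ∈ subPlus φ0 :=
  .inr ⟨i, ψ, h, .inl rfl⟩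

theorem neg_know_mem_subPlus (h : Formula.kh i ψ ∈ subf φ0) :
    Formula.neg (Formula.know i ψ) ∈ subPlus φ0 :=
  .inr ⟨i, ψ, h, .inr rfl⟩

theorem mem_subPlus_of_neg_mem_subPlus : Formula.neg ψ ∈ subPlus φ0 → ψ ∈ subPlus φ0
  | .inl ⟨_, h, .inl rfl⟩ => subf_subset_subPlus φ0 (mem_subf_of_neg_mem_subf h)
  | .inl ⟨_, h, .inr rfl⟩ => subf_subset_subPlus φ0 h
  | .inr ⟨_, _, h, .inr heq⟩ => Formula.neg.inj heq ▸ know_mem_subPlus h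

theorem mem_subf_of_know_mem_subPlus : Formula.know i ψ ∈ subPlus φ0 → ψ ∈ subf φ0
  | .inl ⟨_, h, .inl rfl⟩ => mem_subf_of_know_mem_subf h
  | .inr ⟨_, _, h, .inl rfl⟩ => mem_subf_of_kh_mem_subf h

theorem kh_mem_subf_of_mem_subPlus : Formula.kh i ψ ∈ subPlus φ0 → Formula.kh i ψ ∈ subf φ0
  | .inl ⟨_, h, .inl rfl⟩ => h

theorem mem_subf_of_and_mem_subPlus :
    Formula.and ψ χ ∈ subPlus φ0 → ψ ∈ subf φ0 ∧ χ ∈ subf φ0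
  | .inl ⟨_, h, .inl rfl⟩ => mem_subf_of_and_mem_subf h

theorem finite_subf (φ : Formula P I) : (subf φ).Finite := by
  induction φ with
  | bot | atom _ => exact Set.finite_singleton _
  | neg φ ih | know i φ ih | kh i φ ih => exact ih.insert _
  | and φ ψ ih₁ ih₂ => exact (ih₁.union ih₂).insert _

theorem finite_subPlus (φ0 : Formula P I) : (subPlus φ0).Finite := by
  have hsub := finite_subf φ0
  have hkh : {q : I × Formula P I | Formula.kh q.1 q.2 ∈ subf φ0}.Finite :=
    hsub.preimage (f := fun q : I × Formula P I => Formula.kh q.1 q.2)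
      fun q _ q' _ hq => Prod.ext (Formula.kh.inj hq).1 (Formula.kh.inj hq).2
  refine ((hsub.union (hsub.image Formula.neg)).union
    ((hkh.image fun q => Formula.know q.1 q.2).union
      (hkh.image fun q => Formula.neg (Formula.know q.1 q.2)))).subset ?_
  rintro χ (⟨ψ, hψ, rfl | rfl⟩ | ⟨i, ψ, hψ, rfl | rfl⟩)
  · exact .inl (.inl hψ)
  · exact .inl (.inr ⟨ψ, hψ, rfl⟩)
  · exact .inr (.inl ⟨(i, ψ), hψ, rfl⟩)
  · exact .inr (.inr ⟨(i, ψ), hψ, rfl⟩)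

end Subformulas

section Rules

variable {φ φ0 ψ : Formula P I} {Γ Δ : Set (Formula P I)} {i : I}

theorem subset_of_mem_orOut (hΔ : Δ ∈ orOut Γ φ) : Γ ⊆ Δ := by
  unfold orOut at hΔ
  split at hΔ <;> grind

theorem autoChecked_of_mem_orOut (hΔ : Δ ∈ orOut Γ φ) : AutoChecked Δ φ := by
  unfold orOut at hΔ
  split at hΔ <;> simp only [AutoChecked] <;> grind

theorem ssubset_of_mem_orOut (hφ : ¬ AutoChecked Γ φ) (hΔ : Δ ∈ orOut Γ φ) : Γ ⊂ Δ :=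
  (subset_of_mem_orOut hΔ).ssubset_of_ne fun h => hφ (h ▸ autoChecked_of_mem_orOut hΔ)

theorem subset_subPlus_of_mem_orOut (hΓ : Γ ⊆ subPlus φ0) (hφ : φ ∈ subPlus φ0)
    (hΔ : Δ ∈ orOut Γ φ) : Δ ⊆ subPlus φ0 := by
  have pos := @subf_subset_subPlus P I φ0
  have neg := @neg_mem_subPlus P I φ0
  unfold orOut at hΔ
  split at hΔ
  · have hψ := mem_subPlus_of_neg_mem_subPlus (mem_subPlus_of_neg_mem_subPlus hφ)
    exact hΔ ▸ Set.insert_subset hψ hΓ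
  · obtain ⟨hψ, hχ⟩ := mem_subf_of_and_mem_subPlus hφ
    exact hΔ ▸ Set.insert_subset (pos hψ) (Set.insert_subset (pos hχ) hΓ)
  · obtain ⟨hψ, hχ⟩ := mem_subf_of_and_mem_subPlus (mem_subPlus_of_neg_mem_subPlus hφ)
    rcases hΔ with rfl | rfl | rfl
    · exact Set.insert_subset (neg hψ) (Set.insert_subset (neg hχ) hΓ)
    · exact Set.insert_subset (neg hψ) (Set.insert_subset (pos hχ) hΓ)
    · exact Set.insert_subset (pos hψ) (Set.insert_subset (neg hχ) hΓ)
  · exact hΔ ▸ Set.insert_subset (pos (mem_subf_of_know_mem_subPlus hφ)) hΓ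
  · have hψ := mem_subf_of_know_mem_subPlus (mem_subPlus_of_neg_mem_subPlus hφ)
    rcases hΔ with rfl | rfl
    · exact Set.insert_subset (neg hψ) hΓ
    · exact Set.insert_subset (pos hψ) hΓ
  · have hψ := kh_mem_subf_of_mem_subPlus hφ
    rcases hΔ with rfl | rfl
    · exact Set.insert_subset (neg_know_mem_subPlus hψ) hΓ
    · exact Set.insert_subset (know_mem_subPlus hψ) hΓ
  · have hψ := kh_mem_subf_of_mem_subPlus (mem_subPlus_of_neg_mem_subPlus hφ)
    exact hΔ ▸ Set.insert_subset (neg_know_mem_subPlus hψ) hΓ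
  · exact hΔ.elim

theorem sigmaSet_subset_subPlus (hΓ : Γ ⊆ subPlus φ0)
    (hψ : Formula.neg (Formula.know i ψ) ∈ Γ) : SigmaSet Γ i ψ ⊆ subPlus φ0 :=
  Set.insert_subset
    (neg_mem_subPlus (mem_subf_of_know_mem_subPlus (mem_subPlus_of_neg_mem_subPlus (hΓ hψ))))
    ((Set.sep_subset _ _).trans hΓ)

end Rules

section Tableau

variable {T} {φ0 : Formula P I} {m n : T.Node}

theorem LTree.parent_induction {p : T.Node → Prop} (root : p T.root)
    (child : ∀ m n, T.parent m = some n → p n → p m) (n : T.Node) : p n := by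
  induction n using (measure T.depth).wf.induction with
  | _ n ih =>
    cases hn : T.parent n with
    | none => exact T.eq_root n hn ▸ root
    | some k =>
      have hlt : T.depth k < T.depth n := by rw [T.depth_parent n k hn]; exact Nat.lt_succ_self _
      exact child n k hn (ih k hlt)

theorem Ancestor.not_isLeaf (h : Ancestor T m n) : ¬ IsLeaf T m := by
  obtain ⟨k, hk, -⟩ := Relation.TransGen.head'_iff.1 h
  exact fun hleaf => hleaf k hk

theorem IsTableau.blockedBy_eq_none_of_not_isLeaf (hT : IsTableau φ0 T) (hn : ¬ IsLeaf T n) :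
    T.blockedBy n = none :=
  of_not_not fun hb => hn (hT.blocked_leaf n hb)

theorem IsTableau.andNodeCond_or_orNodeCond (hT : IsTableau φ0 T) (hmn : T.parent m = some n) :
    Saturated (T.label n) ∧ AndNodeCond T n ∨ OrNodeCond T n := by
  have hleaf : ¬ IsLeaf T n := fun hleaf => hleaf m hmn
  have hblatant : ¬ Blatant (T.label n) := fun hb => hleaf (hT.blatant_leaf n hb)
  have hblocked := hT.blockedBy_eq_none_of_not_isLeaf hleaf
  by_cases hsat : Saturated (T.label n)
  · exact .inl ⟨hsat, hT.and_node n hblatant hblocked hsat⟩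
  · exact .inr (hT.or_node n hblatant hblocked hsat)

theorem AndNodeCond.elabel_ne_eps (hn : AndNodeCond T n) (hmn : T.parent m = some n) :
    T.elabel m ≠ ELabel.eps := by
  obtain ⟨-, -, -, hchild⟩ := hn
  rcases hchild m hmn with ⟨_, _, h, -⟩ | ⟨_, _, h, -⟩ | ⟨_, _, _, h, -⟩ <;> simp [h]

theorem OrNodeCond.elabel_eq_eps (hn : OrNodeCond T n) (hmn : T.parent m = some n) :
    T.elabel m = ELabel.eps := by
  obtain ⟨_, -, -, -, hchild⟩ := hn
  exact (hchild m hmn).1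

theorem AndNodeCond.kh_mem_of_act (hn : AndNodeCond T n) (hmn : T.parent m = some n)
    {i : I} {ψ : Formula P I} (hm : T.elabel m = ELabel.act i ψ) :
    Formula.kh i ψ ∈ T.label n ∧ Formula.neg (Formula.know i ψ) ∈ T.label n := by
  obtain ⟨-, -, -, hchild⟩ := hn
  rcases hchild m hmn with ⟨_, _, h, -⟩ | ⟨_, _, h, hkh, hk, -⟩ | ⟨_, _, _, h, -, hkh, hk, -⟩ <;>
    cases hm.symm.trans h <;> exact ⟨hkh, hk⟩

theorem IsTableau.label_subset_subPlus (hT : IsTableau φ0 T) (n : T.Node) :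
    T.label n ⊆ subPlus φ0 := by
  induction n using LTree.parent_induction with
  | root =>
    rw [hT.root_label, Set.singleton_subset_iff]
    exact subf_subset_subPlus φ0 (mem_subf_self φ0)
  | child m n hmn ih =>
    rcases hT.andNodeCond_or_orNodeCond hmn with ⟨-, -, -, -, hchild⟩ | ⟨φ, hφ, -, -, hchild⟩
    · rcases hchild m hmn with
        ⟨i, ψ, -, hψ, hm, -⟩ | ⟨i, ψ, -, hψ, -, hm⟩ | ⟨i, ψ, χ, -, hχ, hψ, -, hm⟩
      · exact hm ▸ sigmaSet_subset_subPlus ih hψ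
      · rw [hm, Set.singleton_subset_iff]
        exact know_mem_subPlus (kh_mem_subf_of_mem_subPlus (ih hψ))
      · exact hm ▸ Set.pair_subset (know_mem_subPlus (kh_mem_subf_of_mem_subPlus (ih hψ))) (ih hχ)
    · exact subset_subPlus_of_mem_orOut ih (ih hφ) (hchild m hmn).2.1

theorem IsTableau.orNodeCond_of_eps (hT : IsTableau φ0 T) (hmn : T.parent m = some n)
    (hm : T.elabel m = ELabel.eps) : OrNodeCond T n :=
  (hT.andNodeCond_or_orNodeCond hmn).resolve_left fun h => h.2.elabel_ne_eps hmn hm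

theorem IsTableau.andNodeCond_of_ne_eps (hT : IsTableau φ0 T) (hmn : T.parent m = some n)
    (hm : T.elabel m ≠ ELabel.eps) : Saturated (T.label n) ∧ AndNodeCond T n :=
  (hT.andNodeCond_or_orNodeCond hmn).resolve_right fun h => hm (h.elabel_eq_eps hmn)

end Tableau

section EpsPaths

variable {T} {φ0 : Formula P I} {S : Set T.Node} {m n : T.Node}

theorem IsSubtree.mem_of_ancestor (hS : IsSubtree T S) (h : Ancestor T m n) (hn : n ∈ S) :
    m ∈ S := by
  induction h using Relation.TransGen.head_induction_on with
  | single h => exact hS.2 _ hn _ h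
  | head h _ ih => exact hS.2 _ ih _ h

theorem IsTableau.label_ssubset_of_epsStep (hT : IsTableau φ0 T) (h : EpsStep T S m n) :
    T.label m ⊂ T.label n := by
  obtain ⟨-, -, hmn, heps⟩ := h
  obtain ⟨_, -, hφ, -, hchild⟩ := hT.orNodeCond_of_eps hmn heps
  exact ssubset_of_mem_orOut hφ (hchild n hmn).2.1

theorem IsTableau.blockedBy_eq_none_of_epsStep (hT : IsTableau φ0 T) (h : EpsStep T S m n) :
    T.blockedBy n = none := by
  obtain ⟨-, -, hmn, heps⟩ := h
  obtain ⟨_, -, -, -, hchild⟩ := hT.orNodeCond_of_eps hmn heps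
  exact (hchild n hmn).2.2

theorem IsTableau.label_subset_of_epsDesc (hT : IsTableau φ0 T) (h : EpsDesc T S m n) :
    T.label m ⊆ T.label n := by
  induction h with
  | refl => rfl
  | tail _ hstep ih => exact ih.trans (hT.label_ssubset_of_epsStep hstep).subset

theorem IsTableau.blockedBy_eq_none_of_epsDesc (hT : IsTableau φ0 T) (h : EpsDesc T S m n)
    (hm : T.blockedBy m = none) : T.blockedBy n = none := by
  rcases Relation.ReflTransGen.cases_tail h with rfl | ⟨_, -, hstep⟩
  · exact hm
  · exact hT.blockedBy_eq_none_of_epsStep hstep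

theorem wellFounded_epsStep (S : Set T.Node) : WellFounded (EpsStep T S) :=
  Subrelation.wf (fun {m n} h => show T.depth m < T.depth n by
    rw [T.depth_parent n m h.2.2.1]; exact Nat.lt_succ_self _) (measure T.depth).wf

theorem IsTableau.wellFounded_swap_epsStep (hT : IsTableau φ0 T) (S : Set T.Node) :
    WellFounded (Function.swap (EpsStep T S)) := by
  have : Finite {Γ : Set (Formula P I) // Γ ⊆ subPlus φ0} :=
    (finite_subPlus φ0).finite_subsets.to_subtype
  let label (n : T.Node) : {Γ : Set (Formula P I) // Γ ⊆ subPlus φ0} :=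
    ⟨T.label n, hT.label_subset_subPlus n⟩
  exact Subrelation.wf (fun h => hT.label_ssubset_of_epsStep h)
    (InvImage.wf label wellFounded_gt)

theorem EpsDesc.left_mem (h : EpsDesc T S m n) (hn : n ∈ S) : m ∈ S := by
  rcases Relation.ReflTransGen.cases_head h with rfl | ⟨_, hstep, -⟩
  exacts [hn, hstep.1]

theorem EpsDesc.right_mem (h : EpsDesc T S m n) (hm : m ∈ S) : n ∈ S := by
  rcases Relation.ReflTransGen.cases_tail h with rfl | ⟨_, -, hstep⟩
  exacts [hm, hstep.2.1]

theorem IsTableau.exists_onPath (hT : IsTableau φ0 T) (hn : n ∈ S) :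
    ∃ ρ : MaxEpsPath T S, OnPath T S ρ n := by
  obtain ⟨top, htop, top_max⟩ := exists_reflTransGen_minimal (wellFounded_epsStep S) n
  obtain ⟨bot, hbot, bot_max⟩ := exists_reflTransGen_minimal (hT.wellFounded_swap_epsStep S) n
  replace hbot : EpsDesc T S n bot := Relation.reflTransGen_swap.1 hbot
  exact ⟨⟨top, bot, EpsDesc.left_mem htop hn, hbot.right_mem hn, htop.trans hbot, top_max,
    bot_max⟩, htop, hbot⟩

theorem OnPath.top_eq {ρ : MaxEpsPath T S} (h : OnPath T S ρ n) (hn : T.elabel n ≠ ELabel.eps) :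
    ρ.top = n := by
  rcases Relation.ReflTransGen.cases_tail h.1 with htop | ⟨_, -, hstep⟩
  · exact htop.symm
  · exact absurd hstep.2.2.2 hn

end EpsPaths

section InducedModel

variable {T} {φ0 : Formula P I} {S : Set T.Node} {i : I}

theorem IsTableau.exists_R_of_act_child (hT : IsTableau φ0 T) (hS : IsSubtree T S)
    {s : (inducedModel T S).W} {a : (inducedModel T S).Act i} {m : T.Node} (hm : m ∈ S)
    (hms : T.parent m = some s.1.bot) (hma : T.elabel m = ELabel.act i a.1) :
    ∃ t : (inducedModel T S).W,
      (inducedModel T S).R i a s t ∧ T.label m ⊆ T.label t.1.bot := by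
  obtain ⟨ρ, hρ⟩ := hT.exists_onPath hm
  obtain rfl : ρ.top = m := hρ.top_eq (by simp [hma])
  have hlabel : T.label ρ.top ⊆ T.label ρ.bot := hT.label_subset_of_epsDesc ρ.desc
  cases hblocked : T.blockedBy ρ.bot with
  | none => exact ⟨⟨ρ, hblocked⟩, ⟨ρ, hms, hma, .inl rfl⟩, hlabel⟩
  | some n =>
    obtain ⟨hanc, hn⟩ := hT.blocked_spec _ n hblocked
    obtain ⟨τ, hτ⟩ := hT.exists_onPath (hS.mem_of_ancestor hanc ρ.bot_mem)
    have hτ_unblocked := hT.blockedBy_eq_none_of_epsDesc hτ.2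
      (hT.blockedBy_eq_none_of_not_isLeaf hanc.not_isLeaf)
    exact ⟨⟨τ, hτ_unblocked⟩, ⟨ρ, hms, hma, .inr ⟨n, hblocked, hτ⟩⟩,
      (hlabel.trans_eq hn.symm).trans (hT.label_subset_of_epsDesc hτ.2)⟩

theorem IsTableau.exists_R_negKh_mem (hT : IsTableau φ0 T) (hS : CompleteSubtree T S)
    {s t : (inducedModel T S).W} {a : (inducedModel T S).Act i} {χ : Formula P I}
    (hst : (inducedModel T S).R i a s t) (hχ : Formula.neg (Formula.kh i χ) ∈ T.label s.1.bot) :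
    ∃ t' : (inducedModel T S).W,
      (inducedModel T S).R i a s t' ∧ Formula.neg (Formula.kh i χ) ∈ T.label t'.1.bot := by
  obtain ⟨ρ, hρs, hρa, -⟩ := hst
  obtain ⟨hsat, hand⟩ := hT.andNodeCond_of_ne_eps hρs (by simp [hρa])
  obtain ⟨hkh, hk⟩ := hand.kh_mem_of_act hρs hρa
  obtain ⟨-, -, rule_k, -⟩ := hand
  obtain ⟨m, hms, hma, hm, -⟩ := rule_k i a.1 χ hχ hkh hk
  obtain ⟨hsub, and_children, -⟩ := hS
  have hmS : m ∈ S := and_children _ s.1.bot_mem (fun hleaf => hleaf _ hρs) hsat m hms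
  obtain ⟨t', hst', hlabel⟩ := hT.exists_R_of_act_child hsub hmS hms hma
  exact ⟨t', hst', hlabel (hm ▸ .inr rfl)⟩

theorem negKh_inherited_along_executions_general (hT : IsTableau φ0 T) (hS : CompleteSubtree T S)
    (σ : Strategy (inducedModel T S) i) {s : (inducedModel T S).W} {χ : Formula P I}
    (hχ : Formula.neg (Formula.kh i χ) ∈ T.label s.1.bot) (hs : σ.act s ≠ none) :
    ∃ ρ : (inducedModel T S).W,
      (∃ a, σ.act s = some a ∧ (inducedModel T S).ctrans i a s ρ) ∧
      Formula.neg (Formula.kh i χ) ∈ T.label ρ.1.bot := by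
  have sim_refl := ((inducedModel T S).equiv i).refl
  obtain ⟨a, ha⟩ := Option.ne_none_iff_exists'.1 hs
  obtain ⟨t, hst⟩ := σ.exec s a ha s (sim_refl s)
  obtain ⟨ρ, hsρ, hρ⟩ := hT.exists_R_negKh_mem hS hst hχ
  exact ⟨ρ, ⟨a, ha, s, ρ, sim_refl s, sim_refl ρ, hsρ⟩, hρ⟩

end InducedModel

/-- if `¬Kh_i χ ∈ L(δ h)` for the end of a non-complete possible
execution `[δ 0]⋯[δ h]` of an `i`-strategy σ in the induced model, then the
execution can be extended by one σ-step to a state `ρ` with `¬Kh_i χ ∈ L(ρ)`. -/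
theorem negKh_inherited_along_executions {P I : Type} (hI : ∃ i j : I, i ≠ j)
    (φ0 : Formula P I) (T : LTree P I) (hT : IsTableau φ0 T)
    (S : Set T.Node) (hcomp : CompleteSubtree T S)
    (i : I) (χ : Formula P I)
    (σ : Strategy (inducedModel T S) i)
    (δ : ℕ → (inducedModel T S).W) (h : ℕ)
    (hexec : σ.FinExec δ h)
    (hkh : Formula.neg (Formula.kh i χ) ∈ T.label (δ h).1.bot)
    (hnotcomplete : σ.act (δ h) ≠ none) :
    ∃ ρ : (inducedModel T S).W,
      (∃ a, σ.act (δ h) = some a ∧ (inducedModel T S).ctrans i a (δ h) ρ) ∧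
      Formula.neg (Formula.kh i χ) ∈ T.label ρ.1.bot :=
  negKh_inherited_along_executions_general hT hcomp σ hkh hnotcomplete

end ELKh
end
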